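/- arXiv:1804.07277 — 4 statements merged into one kernel-verified Lean document; each statement's English description precedes it below -/
import Mathlib

section
/- If F : (ℕ → ℕ) → ℕ is continuous with respect to the Baire topology, then the Spector tree 𝒯^S(F) is well-founded. -/
/-- The function `[x⃗ j^ω]` extending a finite sequence by the constant `j`. -/
def extSeq (x : List ℕ) (j : ℕ) : ℕ → ℕ := fun i => x.getD i j

/-- The Spector bar condition: `F([x⃗ 0^ω]) < |x⃗|`. -/
def SpecBar (F : (ℕ → ℕ) → ℕ) (x : List ℕ) : Prop :=
  F (extSeq x 0) < x.length

/-- The Kohlenbach bar condition: `F([x⃗ 0^ω]) = F([x⃗ 1^ω])`. -/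
def KohBar (F : (ℕ → ℕ) → ℕ) (x : List ℕ) : Prop :=
  F (extSeq x 0) = F (extSeq x 1)

/-- The Spector tree of `F`: sequences none of whose proper prefixes
satisfy the Spector bar condition. -/
def SpecTree (F : (ℕ → ℕ) → ℕ) : Set (List ℕ) :=
  {x | ∀ y, y <+: x → y ≠ x → ¬ SpecBar F y}

/-- The Kohlenbach tree of `F`. -/
def KohTree (F : (ℕ → ℕ) → ℕ) : Set (List ℕ) :=
  {x | ∀ y, y <+: x → y ≠ x → ¬ KohBar F y}

/-- `x` is a leaf of `T`. -/
def LeafNode (T : Set (List ℕ)) (x : List ℕ) : Prop :=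
  x ∈ T ∧ ∀ y : ℕ, x ++ [y] ∉ T

/-- `x` is an internal node of `T`. -/
def InternalNode (T : Set (List ℕ)) (x : List ℕ) : Prop :=
  x ∈ T ∧ ∀ y : ℕ, x ++ [y] ∈ T

/-- `T` is a tree: nonempty, prefix-closed, and every node is a leaf or internal. -/
def IsTree (T : Set (List ℕ)) : Prop :=
  T.Nonempty ∧ (∀ x ∈ T, ∀ y, y <+: x → y ∈ T) ∧
    ∀ x ∈ T, LeafNode T x ∨ InternalNode T x

/-- `T` is well-founded: no infinite sequence all of whose initial segments lie in `T`. -/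
def WFTree (T : Set (List ℕ)) : Prop :=
  ¬ ∃ x : ℕ → ℕ, ∀ i : ℕ, (List.range i).map x ∈ T

/-- The odd part `θ(n)` of a natural number. -/
def oddPart (n : ℕ) : ℕ := n / 2 ^ (n.factorization 2)

/-!
The truncations `[(x(0),…,x(n-1)) 0^ω]` converge to `x`, so for `F` continuous at `x` and large `n`
the value of `F` on them is `F x`, which is eventually smaller than the length `n`. Hence every
branch meets the Spector bar condition, and it leaves the tree one step later.
-/

open Filter Topology

section Truncation

variable (x : ℕ → ℕ)

theorem extSeq_map_range_of_lt (j : ℕ) {n i : ℕ} (h : i < n) :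
    extSeq ((List.range n).map x) j i = x i := by
  simp [extSeq, h]

theorem tendsto_extSeq_map_range (j : ℕ) :
    Tendsto (fun n => extSeq ((List.range n).map x) j) atTop (𝓝 x) := by
  refine tendsto_pi_nhds.2 fun i => tendsto_nhds_of_eventually_eq ?_
  filter_upwards [eventually_gt_atTop i] with n hn using extSeq_map_range_of_lt x j hn

end Truncation

theorem prefix_map_range_iff {α : Type*} {x : ℕ → α} {y : List α} {n : ℕ} :
    y <+: (List.range n).map x ↔ ∃ m ≤ n, y = (List.range m).map x := by
  constructor
  · intro h
    refine ⟨y.length, by simpa using h.length_le, ?_⟩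
    rw [List.prefix_iff_eq_take.1 h, ← List.map_take, List.take_range]
    simp
  · rintro ⟨m, hm, rfl⟩
    rw [← min_eq_left hm, ← List.take_range, List.map_take]
    exact List.take_prefix _ _

section SpectorTree

variable {F : (ℕ → ℕ) → ℕ} {x : ℕ → ℕ}

theorem map_range_mem_specTree_iff {n : ℕ} :
    (List.range n).map x ∈ SpecTree F ↔ ∀ m < n, ¬ SpecBar F ((List.range m).map x) := by
  constructor
  · intro h m hm
    refine h _ (prefix_map_range_iff.2 ⟨m, hm.le, rfl⟩) fun heq => hm.ne ?_
    simpa using congrArg List.length heq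
  · intro h y hy hne
    obtain ⟨m, hm, rfl⟩ := prefix_map_range_iff.1 hy
    exact h m (hm.lt_of_ne fun hmn => hne (by rw [hmn]))

theorem wfTree_specTree_iff :
    WFTree (SpecTree F) ↔ ∀ x : ℕ → ℕ, ∃ n, SpecBar F ((List.range n).map x) := by
  simp only [WFTree, map_range_mem_specTree_iff, not_exists, not_forall, not_not]
  exact forall_congr' fun x =>
    ⟨fun ⟨_, m, _, hm⟩ => ⟨m, hm⟩, fun ⟨n, hn⟩ => ⟨n + 1, n, n.lt_succ_self, hn⟩⟩

theorem eventually_specBar_map_range (hF : ContinuousAt F x) :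
    ∀ᶠ n in atTop, SpecBar F ((List.range n).map x) := by
  have hF_eq : ∀ᶠ n in atTop, F (extSeq ((List.range n).map x) 0) = F x := by
    simpa [nhds_discrete] using hF.tendsto.comp (tendsto_extSeq_map_range x 0)
  filter_upwards [hF_eq, eventually_gt_atTop (F x)] with n hn hlt
  simpa [SpecBar, hn] using hlt

end SpectorTree

theorem spector_tree_wf_of_continuous (F : (ℕ → ℕ) → ℕ) (hF : Continuous F) :
    WFTree (SpecTree F) :=
  wfTree_specTree_iff.2 fun _ => (eventually_specBar_map_range hF.continuousAt).exists
end

section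
/- Let F : (ℕ → ℕ) → ℕ be such that the Kohlenbach tree 𝒯^K(F) is well-founded and the empty sequence does not satisfy the Kohlenbach bar condition, i.e. F(λi.0) ≠ F(λi.1). Define U F : (ℕ → ℕ) → ℕ by U F (g) = r₀(g) − 1 (truncated subtraction), where r₀(g) is the least r such that (g(0),…,g(r−1)) satisfies the Kohlenbach bar condition with respect to F (such r exists by well-foundedness of 𝒯^K(F)). Then the Spector tree of U F equals the Kohlenbach tree of F: 𝒯^S(U F) = 𝒯^K(F). -/
/-!
The least initial segment of `[x⃗ 0^ω]` in the bar has length at most `|x⃗|` exactly when some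
prefix of `x⃗` lies in the bar. So the Spector bar condition for `U` is the closure of the original
bar under extension, and passing to this closure does not change which sequences have no proper
prefix in the bar.
-/

/-- The tree of a bar condition `P`: the sequences none of whose proper prefixes satisfy `P`.
It is the common form of the Spector and Kohlenbach trees, which are definitionally
`BarTree (SpecBar F)` and `BarTree (KohBar F)`. -/
def BarTree {α : Type*} (P : List α → Prop) : Set (List α) :=
  {x | ∀ y, y <+: x → y ≠ x → ¬ P y}

theorem barTree_exists_prefix {α : Type*} (P : List α → Prop) :
    BarTree (fun x => ∃ y, y <+: x ∧ P y) = BarTree P := by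
  ext x
  constructor
  · intro hx y hyx hne hy
    exact hx y hyx hne ⟨y, List.prefix_rfl, hy⟩
  · rintro hx y hyx hne ⟨z, hzy, hz⟩
    have hzx : z ≠ x := by
      rintro rfl
      exact hne (antisymm hyx hzy)
    exact hx z (hzy.trans hyx) hzx hz

theorem map_range_extSeq {x : List ℕ} {r : ℕ} (hr : r ≤ x.length) (j : ℕ) :
    (List.range r).map (extSeq x j) = x.take r := by
  refine List.ext_getElem (by simp [hr]) fun i _ hi => ?_
  have hix : i < x.length := hi.trans_le (List.length_take_le' r x)
  simp [extSeq, hix]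

theorem le_length_iff_exists_prefix {P : List ℕ → Prop} {x : List ℕ} {j r : ℕ}
    (hr : IsLeast {r | P ((List.range r).map (extSeq x j))} r) :
    r ≤ x.length ↔ ∃ y, y <+: x ∧ P y := by
  constructor
  · intro hrx
    exact ⟨x.take r, List.take_prefix r x, map_range_extSeq hrx j ▸ hr.1⟩
  · rintro ⟨y, hyx, hy⟩
    have hmem : P ((List.range y.length).map (extSeq x j)) := by
      rwa [map_range_extSeq hyx.length_le, ← List.prefix_iff_eq_take.1 hyx]
    exact (hr.2 hmem).trans hyx.length_le

theorem specBar_iff_exists_prefix {P : List ℕ → Prop} {U : (ℕ → ℕ) → ℕ} {x : List ℕ}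
    (hnil : ¬ P [])
    (hU : ∃ r, IsLeast {r | P ((List.range r).map (extSeq x 0))} r ∧ U (extSeq x 0) = r - 1) :
    SpecBar U x ↔ ∃ y, y <+: x ∧ P y := by
  obtain ⟨r, hr, hUr⟩ := hU
  have hpos : 0 < r := Nat.pos_of_ne_zero fun h => hnil (by simpa [h] using hr.1)
  rw [SpecBar, hUr, ← le_length_iff_exists_prefix hr]
  omega

theorem spector_tree_of_U_eq_kohlenbach_tree_general {P : List ℕ → Prop} (hnil : ¬ P [])
    {U : (ℕ → ℕ) → ℕ}
    (hU : ∀ g : ℕ → ℕ, ∃ r, IsLeast {r | P ((List.range r).map g)} r ∧ U g = r - 1) :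
    SpecTree U = BarTree P := by
  have hbar : SpecBar U = fun x => ∃ y, y <+: x ∧ P y :=
    funext fun x => propext (specBar_iff_exists_prefix hnil (hU (extSeq x 0)))
  calc
    SpecTree U = BarTree (SpecBar U) := rfl
    _ = BarTree (fun x => ∃ y, y <+: x ∧ P y) := by rw [hbar]
    _ = BarTree P := barTree_exists_prefix P

theorem spector_tree_of_U_eq_kohlenbach_tree (F : (ℕ → ℕ) → ℕ)
    (hwf : WFTree (KohTree F))
    (hne : F (fun _ => 0) ≠ F (fun _ => 1))
    (U : (ℕ → ℕ) → ℕ)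
    (hU : ∀ g : ℕ → ℕ, ∃ r : ℕ,
      KohBar F ((List.range r).map g) ∧
      (∀ r' < r, ¬ KohBar F ((List.range r').map g)) ∧
      U g = r - 1) :
    SpecTree U = KohTree F := by
  refine spector_tree_of_U_eq_kohlenbach_tree_general (P := KohBar F) hne fun g => ?_
  obtain ⟨r, hr, hmin, hUr⟩ := hU g
  exact ⟨r, ⟨hr, fun s hs => not_lt.1 fun hlt => hmin s hlt hs⟩, hUr⟩
end

section
/- Let 𝒯 be a well-founded tree and c an injective function from finite sequences of naturals to ℕ, and let φ₀ be the unique function on 𝒯 satisfying φ₀(x⃗) = 2·c(x⃗)+1 for every leaf x⃗ of 𝒯 and φ₀(x⃗) = 2·φ₀(x⃗·0) for every internal node x⃗ of 𝒯. Suppose x⃗ is an internal node of 𝒯 and x⃗·z is an internal node of 𝒯 for every z ∈ ℕ. Then the maps z ↦ φ₀(x⃗·z·0) and z ↦ θ(φ₀(x⃗·z·0)) from ℕ to ℕ are injective, where θ(n) denotes the odd part of n (the unique odd number with n = 2^t·θ(n) for some t, for n ≥ 1). -/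
/-!
Following zeros from a node `v` of `T` ends, by well-foundedness, at a leaf `v ++ 0ⁿ`, and then
`φ₀ v = 2ⁿ * (2 * c (v ++ 0ⁿ) + 1)`. The odd part of `φ₀ v` is therefore a code of that leaf, and
two nodes with the same leaf are both prefixes of it, hence comparable.
-/

theorem oddPart_two_pow_mul (k n : ℕ) : oddPart (2 ^ k * n) = oddPart n :=
  Nat.ordCompl_self_pow_mul n k Nat.prime_two

theorem oddPart_of_odd {n : ℕ} (hn : Odd n) : oddPart n = n :=
  (Nat.ordCompl_eq_self_iff_zero_or_not_dvd n Nat.prime_two).mpr (Or.inr hn.not_two_dvd_nat)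

theorem map_range_extSeq_prefix (v : List ℕ) (j n : ℕ) :
    (List.range n).map (extSeq v j) <+: v ++ List.replicate n j := by
  refine List.prefix_iff_getElem.mpr ⟨by simp, fun i hi => ?_⟩
  by_cases hiv : i < v.length
  · simp [extSeq, hiv]
  · simp [extSeq, not_lt.mp hiv]

section Tree

variable {T : Set (List ℕ)} {v : List ℕ}

theorem IsTree.mem_of_prefix {w : List ℕ} (hT : IsTree T) (hw : w ∈ T) (hvw : v <+: w) : v ∈ T :=
  hT.2.1 w hw v hvw

theorem IsTree.internalNode_of_append_mem {y : ℕ} (hT : IsTree T) (hvy : v ++ [y] ∈ T) :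
    InternalNode T v :=
  (hT.2.2 v (hT.mem_of_prefix hvy (List.prefix_append v [y]))).resolve_left
    fun hleaf => hleaf.2 y hvy

theorem IsTree.leafNode_of_append_notMem {y : ℕ} (hT : IsTree T) (hv : v ∈ T)
    (hvy : v ++ [y] ∉ T) : LeafNode T v :=
  (hT.2.2 v hv).resolve_right fun hint => hvy (hint.2 y)

theorem IsTree.exists_leafNode_append_replicate (hT : IsTree T) (hwf : WFTree T)
    (hv : v ∈ T) (j : ℕ) : ∃ n, LeafNode T (v ++ List.replicate n j) := by
  by_contra! hno_leaf
  have hbranch (n : ℕ) : v ++ List.replicate n j ∈ T := by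
    induction n with
    | zero => simpa using hv
    | succ n ih =>
      by_contra hsucc
      rw [List.replicate_succ', ← List.append_assoc] at hsucc
      exact hno_leaf n (hT.leafNode_of_append_notMem ih hsucc)
  exact hwf ⟨extSeq v j, fun n => hT.mem_of_prefix (hbranch n) (map_range_extSeq_prefix v j n)⟩

end Tree

section Labelling

variable {T : Set (List ℕ)} {c φ₀ : List ℕ → ℕ} {v w : List ℕ}

theorem phi0_eq_two_pow_mul (hT : IsTree T)
    (hint : ∀ v, InternalNode T v → φ₀ v = 2 * φ₀ (v ++ [0])) {n : ℕ}
    (hn : v ++ List.replicate n 0 ∈ T) : φ₀ v = 2 ^ n * φ₀ (v ++ List.replicate n 0) := by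
  induction n with
  | zero => simp
  | succ n ih =>
    rw [List.replicate_succ', ← List.append_assoc] at hn ⊢
    have hinternal := hT.internalNode_of_append_mem hn
    rw [ih hinternal.1, hint _ hinternal, pow_succ, mul_assoc]

theorem oddPart_phi0_of_leafNode (hT : IsTree T)
    (hleaf : ∀ v, LeafNode T v → φ₀ v = 2 * c v + 1)
    (hint : ∀ v, InternalNode T v → φ₀ v = 2 * φ₀ (v ++ [0])) {n : ℕ}
    (hn : LeafNode T (v ++ List.replicate n 0)) :
    oddPart (φ₀ v) = 2 * c (v ++ List.replicate n 0) + 1 := by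
  rw [phi0_eq_two_pow_mul hT hint hn.1, oddPart_two_pow_mul, hleaf _ hn,
    oddPart_of_odd (odd_two_mul_add_one _)]

theorem prefix_or_prefix_of_oddPart_phi0_eq (hT : IsTree T) (hwf : WFTree T)
    (hc : Set.InjOn c {v | LeafNode T v})
    (hleaf : ∀ v, LeafNode T v → φ₀ v = 2 * c v + 1)
    (hint : ∀ v, InternalNode T v → φ₀ v = 2 * φ₀ (v ++ [0]))
    (hv : v ∈ T) (hw : w ∈ T) (hvw : oddPart (φ₀ v) = oddPart (φ₀ w)) :
    v <+: w ∨ w <+: v := by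
  obtain ⟨m, hm⟩ := hT.exists_leafNode_append_replicate hwf hv 0
  obtain ⟨n, hn⟩ := hT.exists_leafNode_append_replicate hwf hw 0
  rw [oddPart_phi0_of_leafNode hT hleaf hint hm,
    oddPart_phi0_of_leafNode hT hleaf hint hn] at hvw
  have same_leaf : v ++ List.replicate m 0 = w ++ List.replicate n 0 := hc hm hn (by lia)
  exact List.prefix_or_prefix_of_prefix (List.prefix_append v _)
    (same_leaf ▸ List.prefix_append w _)

theorem phi0_injective_general (hT : IsTree T) (hwf : WFTree T)
    (hc : Set.InjOn c {v | LeafNode T v})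
    (hleaf : ∀ v, LeafNode T v → φ₀ v = 2 * c v + 1)
    (hint : ∀ v, InternalNode T v → φ₀ v = 2 * φ₀ (v ++ [0]))
    {ι : Type*} (node : ι → List ℕ) (hmem : ∀ i, node i ∈ T)
    (hanti : ∀ i j, node i <+: node j → i = j) :
    Function.Injective (fun i => φ₀ (node i)) ∧
    Function.Injective (fun i => oddPart (φ₀ (node i))) := by
  have hodd : Function.Injective (fun i => oddPart (φ₀ (node i))) := fun i j hij =>
    (prefix_or_prefix_of_oddPart_phi0_eq hT hwf hc hleaf hint (hmem i) (hmem j) hij).elim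
      (hanti i j) (fun hji => (hanti j i hji).symm)
  exact ⟨hodd.of_comp (f := oddPart), hodd⟩

end Labelling

theorem phi0_injective (T : Set (List ℕ)) (hT : IsTree T) (hwf : WFTree T)
    (c : List ℕ → ℕ) (hc : Function.Injective c)
    (φ₀ : List ℕ → ℕ)
    (hleaf : ∀ v, LeafNode T v → φ₀ v = 2 * c v + 1)
    (hint : ∀ v, InternalNode T v → φ₀ v = 2 * φ₀ (v ++ [0]))
    (x : List ℕ) (hx : InternalNode T x)
    (hxz : ∀ z : ℕ, InternalNode T (x ++ [z])) :
    Function.Injective (fun z : ℕ => φ₀ (x ++ [z, 0])) ∧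
    Function.Injective (fun z : ℕ => oddPart (φ₀ (x ++ [z, 0]))) :=
  phi0_injective_general hT hwf hc.injOn hleaf hint (fun z => x ++ [z, 0])
    (fun z => by simpa using (hxz z).2 0) (fun z w hzw => by simpa using hzw)
end

section
/- Let 𝒯 be a well-founded tree, c an injective function from finite sequences of naturals to ℕ, and φ₀ the unique function on 𝒯 with φ₀(x⃗) = 2·c(x⃗)+1 on leaves and φ₀(x⃗) = 2·φ₀(x⃗·0) on internal nodes. Let d ∈ ℕ and x₀,…,x_d ∈ ℕ be such that for every w ≤ d+1 the sequence x^w := (x₀,…,x_{w−1}) is an internal node of 𝒯. Put y_w = φ₀(x^w·0) for w ≤ d+1, and assume the odd parts θ(y₀),…,θ(y_{d+1}) are pairwise distinct. Let K ∈ ℕ and define G₁ : (ℕ → ℕ) → ℕ by: G₁(g) = K if g(0) = y_{d+1}; otherwise, if g(0) = y_w for some w ≤ d (unique, since the y's are pairwise distinct), then G₁(g) = K if g(x_w) = K and G₁(g) = 2·g(0) otherwise; otherwise G₁(g) = 2·g(0). Let φ₁ be the unique function on 𝒯 with φ₁(x⃗) = 2·c(x⃗)+1 on leaves and φ₁(x⃗)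 = G₁(λz. φ₁(x⃗·z)) on internal nodes. Then φ₁(x^w·0) = y_w for every w ≤ d+1. -/
/-!
From `φ₀ v = 2 * φ₀ (v·0)` the values of `φ₀` along `u = x^w·0`, `u·0`, `u·00`, … are halved at each
step, so they share the odd part of `φ₀ u = y_w` and decrease strictly. As no other exceptional
value `y_w'` has that odd part, `φ₀` takes no exceptional value on the branch beyond `u`. There `G₁`
therefore doubles too, and `φ₁` agrees with `φ₀` on the branch, from its leaf back to `u`.
-/

theorem exists_forall_map_range {α : Type*} {p : List α → Prop} (nil : p [])
    (extend : ∀ v, p v → ∃ a, p (v ++ [a])) :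
    ∃ x : ℕ → α, ∀ n, p ((List.range n).map x) := by
  have : Nonempty α := (extend [] nil).nonempty
  choose! next hnext using extend
  let prefixes : ℕ → List α := fun n => Nat.rec [] (fun _ v => v ++ [next v]) n
  have hprefixes : ∀ n, (List.range n).map (fun i => next (prefixes i)) = prefixes n := by
    intro n
    induction n with
    | zero => rfl
    | succ n ih => rw [List.range_succ, List.map_append, ih]; rfl
  refine ⟨fun i => next (prefixes i), fun n => ?_⟩
  rw [hprefixes]
  induction n with
  | zero => exact nil
  | succ n ih => exact hnext _ ih

theorem IsTree.bar_induction {T : Set (List ℕ)} (hT : IsTree T) (hwf : WFTree T)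
    {P : List ℕ → Prop} (leaf : ∀ v, LeafNode T v → P v)
    (internal : ∀ v, InternalNode T v → (∀ z, P (v ++ [z])) → P v) :
    ∀ v ∈ T, P v := by
  obtain ⟨-, hprefix, hsplit⟩ := hT
  by_contra! ⟨u₀, hu₀, hPu₀⟩
  -- Recording a failure of `P` at an extension of `v` lets the infinite path start at the root.
  let Bad (v : List ℕ) : Prop := ∃ u ∈ T, v <+: u ∧ ¬ P u
  have bad_nil : Bad [] := ⟨u₀, hu₀, List.nil_prefix, hPu₀⟩
  have bad_extend : ∀ v, Bad v → ∃ z, Bad (v ++ [z]) := by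
    rintro v ⟨u, hu, ⟨t, rfl⟩, hPu⟩
    cases t with
    | cons z t => exact ⟨z, v ++ z :: t, hu, ⟨t, by simp⟩, hPu⟩
    | nil =>
      rw [List.append_nil] at hu hPu
      have hv : InternalNode T v := (hsplit v hu).resolve_left fun hl => hPu (leaf v hl)
      obtain ⟨z, hz⟩ := not_forall.mp fun h => hPu (internal v hv h)
      exact ⟨z, v ++ [z], hv.2 z, List.prefix_rfl, hz⟩
  obtain ⟨x, hx⟩ := exists_forall_map_range bad_nil bad_extend
  refine hwf ⟨x, fun n => ?_⟩
  obtain ⟨u, hu, hle, -⟩ := hx n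
  exact hprefix u hu _ hle

/-- `φ` satisfies on `T` the bar recursion equations with leaf function `ℓ` and branch
functional `G`. Values outside `T` are unconstrained. -/
structure IsBarRec {α : Type*} (T : Set (List ℕ)) (ℓ : List ℕ → α) (G : (ℕ → α) → α)
    (φ : List ℕ → α) : Prop where
  leaf : ∀ v, LeafNode T v → φ v = ℓ v
  internal : ∀ v, InternalNode T v → φ v = G fun z => φ (v ++ [z])

theorem IsBarRec.forall_mem {α : Type*} {T : Set (List ℕ)} {ℓ : List ℕ → α} {G : (ℕ → α) → α}
    {φ : List ℕ → α} (hφ : IsBarRec T ℓ G φ) (hT : IsTree T) (hwf : WFTree T) {p : α → Prop}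
    (leaf : ∀ v, LeafNode T v → p (ℓ v)) (branch : ∀ g, (∀ z, p (g z)) → p (G g)) :
    ∀ v ∈ T, p (φ v) := by
  refine hT.bar_induction hwf (fun v hv => ?_) (fun v hv ih => ?_)
  · exact hφ.leaf v hv ▸ leaf v hv
  · exact hφ.internal v hv ▸ branch _ ih

theorem oddPart_two_mul (n : ℕ) : oddPart (2 * n) = oddPart n := by
  simpa only [oddPart, pow_one] using Nat.ordCompl_self_pow_mul n 1 Nat.prime_two

section Doubling

variable {T : Set (List ℕ)} {ℓ : List ℕ → ℕ} {G : (ℕ → ℕ) → ℕ} {φ₀ φ₁ : List ℕ → ℕ}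

theorem IsBarRec.eq_of_forall_oddPart_eq_imp_le (h₁ : IsBarRec T ℓ G φ₁)
    (h₀ : IsBarRec T ℓ (fun g => 2 * g 0) φ₀) (hT : IsTree T) (hwf : WFTree T)
    (hℓ : ∀ v, LeafNode T v → 0 < ℓ v) {Y : Set ℕ} (hG : ∀ g, g 0 ∉ Y → G g = 2 * g 0) :
    ∀ v ∈ T, (∀ y ∈ Y, oddPart y = oddPart (φ₀ v) → φ₀ v ≤ y) → φ₁ v = φ₀ v := by
  have φ₀_pos : ∀ v ∈ T, 0 < φ₀ v :=
    h₀.forall_mem hT hwf hℓ fun g hg => Nat.mul_pos two_pos (hg 0)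
  refine hT.bar_induction hwf (fun v hv _ => ?_) (fun v hv ih hle => ?_)
  · rw [h₁.leaf v hv, h₀.leaf v hv]
  have double : φ₀ v = 2 * φ₀ (v ++ [0]) := h₀.internal v hv
  have lt : ∀ y ∈ Y, oddPart y = oddPart (φ₀ (v ++ [0])) → φ₀ (v ++ [0]) < y := by
    intro y hy hodd
    have child_pos : 0 < φ₀ (v ++ [0]) := φ₀_pos _ (hv.2 0)
    have le_y : φ₀ v ≤ y := hle y hy (by rw [hodd, double, oddPart_two_mul])
    omega
  have child : φ₁ (v ++ [0]) = φ₀ (v ++ [0]) := ih 0 fun y hy hodd => (lt y hy hodd).le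
  have child_notMem : φ₁ (v ++ [0]) ∉ Y := fun hmem => by
    rw [child] at hmem
    exact (lt _ hmem rfl).false
  rw [h₁.internal v hv, hG _ child_notMem, child, double]

theorem phi1_y_values_general (hT : IsTree T) (hwf : WFTree T)
    (hℓ : ∀ v, LeafNode T v → 0 < ℓ v) (h₀ : IsBarRec T ℓ (fun g => 2 * g 0) φ₀)
    {ι : Type*} {u : ι → List ℕ} (hu : ∀ i, u i ∈ T)
    (hdist : Function.Injective fun i => oddPart (φ₀ (u i)))
    (hG : ∀ g, g 0 ∉ Set.range (fun i => φ₀ (u i)) → G g = 2 * g 0)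
    (h₁ : IsBarRec T ℓ G φ₁) (i : ι) :
    φ₁ (u i) = φ₀ (u i) := by
  refine h₁.eq_of_forall_oddPart_eq_imp_le h₀ hT hwf hℓ hG (u i) (hu i) ?_
  rintro _ ⟨j, rfl⟩ hodd
  exact (congrArg (fun k => φ₀ (u k)) (hdist hodd)).ge

end Doubling

theorem phi1_y_values (T : Set (List ℕ)) (hT : IsTree T) (hwf : WFTree T)
    (c : List ℕ → ℕ) (hc : Function.Injective c)
    (φ₀ : List ℕ → ℕ)
    (hleaf0 : ∀ v, LeafNode T v → φ₀ v = 2 * c v + 1)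
    (hint0 : ∀ v, InternalNode T v → φ₀ v = 2 * φ₀ (v ++ [0]))
    (d : ℕ) (xs : ℕ → ℕ)
    (hxs : ∀ w ≤ d + 1, InternalNode T ((List.range w).map xs))
    (y : ℕ → ℕ)
    (hy : ∀ w ≤ d + 1, y w = φ₀ ((List.range w).map xs ++ [0]))
    (hdist : ∀ w ≤ d + 1, ∀ w' ≤ d + 1, w ≠ w' → oddPart (y w) ≠ oddPart (y w'))
    (K : ℕ) (G₁ : (ℕ → ℕ) → ℕ)
    (hG₁ : ∀ g : ℕ → ℕ,
      (g 0 = y (d + 1) → G₁ g = K) ∧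
      (∀ w ≤ d, g 0 = y w → g 0 ≠ y (d + 1) →
        G₁ g = if g (xs w) = K then K else 2 * g 0) ∧
      ((∀ w ≤ d + 1, g 0 ≠ y w) → G₁ g = 2 * g 0))
    (φ₁ : List ℕ → ℕ)
    (hleaf1 : ∀ v, LeafNode T v → φ₁ v = 2 * c v + 1)
    (hint1 : ∀ v, InternalNode T v → φ₁ v = G₁ (fun z => φ₁ (v ++ [z]))) :
    ∀ w ≤ d + 1, φ₁ ((List.range w).map xs ++ [0]) = y w := by
  intro w hw
  rw [hy w hw]
  refine phi1_y_values_general (ι := Set.Iic (d + 1))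
    (u := fun i => (List.range i).map xs ++ [0]) hT hwf (fun v _ => Nat.succ_pos (2 * c v))
    ⟨hleaf0, hint0⟩ (fun i => (hxs i i.2).2 0) ?_ ?_ ⟨hleaf1, hint1⟩ ⟨w, hw⟩
  · rintro ⟨i, hi⟩ ⟨j, hj⟩ hij
    refine Subtype.ext (by_contra fun hne => hdist i hi j hj hne ?_)
    rwa [hy i hi, hy j hj]
  · exact fun g hg => (hG₁ g).2.2 fun i hi hgi => hg ⟨⟨i, hi⟩, (hgi.trans (hy i hi)).symm⟩
end
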